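/- The infinite series ∑_{n=1}^{∞} 1/(n(2n−1)(4n−1)(4n−3)) converges to (6·ln 2 − π)/3. -/

import Mathlib

/-!
By partial fractions, with `m = n + 1`, the summand is
`-1/(3m) - 2/(2m-1) + 4/(4m-1) + (4/3)/(4m-3)`. Hence the `N`-th partial sum equals
`-(4/3) L_{2N} + (8/3) H_{4N} - (10/3) H_{2N} + (2/3) H_N`, where `L` denotes the partial sums of
the Leibniz series for `π / 4` and `H` the harmonic numbers. The coefficients of the `H` terms add up
to `0`, so replacing each `H_k` by `H_k - log k → γ` cancels the Euler constant and leaves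
`(8/3) log 4 - (10/3) log 2 = 2 log 2`. The terms are nonnegative, so convergence of the partial
sums gives `HasSum`.
-/

open Real Filter Topology

/-- Closed form of the partial sums, by partial fractions. -/
lemma partial_sum_eq (N : ℕ) :
    ∑ n ∈ Finset.range N,
      1 / (((n:ℝ)+1) * (2*((n:ℝ)+1)-1) * (4*((n:ℝ)+1)-1) * (4*((n:ℝ)+1)-3)) =
    -(4/3) * (∑ i ∈ Finset.range (2 * N), (-1 : ℝ) ^ i / (2 * i + 1))
      + 8/3 * (harmonic (4 * N) : ℝ) - 10/3 * (harmonic (2 * N) : ℝ)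
      + 2/3 * (harmonic N : ℝ) := by
  induction N with
  | zero => simp
  | succ N ih =>
    rw [Finset.sum_range_succ, ih, show 2 * (N + 1) = 2 * N + 1 + 1 by ring,
      show 4 * (N + 1) = 4 * N + 1 + 1 + 1 + 1 by ring]
    simp only [Finset.sum_range_succ, harmonic_succ, pow_succ, pow_mul]
    push_cast
    have hN : (0:ℝ) ≤ N := N.cast_nonneg
    have h1 : (N:ℝ) + 1 ≠ 0 := by positivity
    have h2 : 2 * (N:ℝ) + 1 ≠ 0 := by positivity
    have h3 : 4 * (N:ℝ) + 1 ≠ 0 := by positivity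
    have h4 : 4 * (N:ℝ) + 3 ≠ 0 := by positivity
    rw [show 2 * ((N:ℝ) + 1) - 1 = 2 * N + 1 by ring,
      show 4 * ((N:ℝ) + 1) - 1 = 4 * N + 3 by ring,
      show 4 * ((N:ℝ) + 1) - 3 = 4 * N + 1 by ring,
      show 2 * (2 * (N:ℝ)) + 1 = 4 * N + 1 by ring,
      show 2 * (2 * (N:ℝ) + 1) + 1 = 4 * N + 3 by ring,
      show 4 * (N:ℝ) + 1 + 1 = 2 * (2 * N + 1) by ring,
      show 4 * (N:ℝ) + 2 + 1 = 4 * N + 3 by ring,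
      show 4 * (N:ℝ) + 3 + 1 = 4 * (N + 1) by ring,
      show 2 * (N:ℝ) + 1 + 1 = 2 * (N + 1) by ring]
    norm_num
    field_simp
    ring

theorem stmt_17 :
    HasSum (fun n : ℕ => 1 / (((n:ℝ)+1) * (2*((n:ℝ)+1)-1) * (4*((n:ℝ)+1)-1) * (4*((n:ℝ)+1)-3))) ((6 * Real.log 2 - π) / 3) := by
  rw [hasSum_iff_tendsto_nat_of_nonneg]
  · simp only [partial_sum_eq]
    have t2 : Tendsto (fun N : ℕ => 2 * N) atTop atTop :=
      tendsto_id.const_mul_atTop' (by norm_num)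
    have t4 : Tendsto (fun N : ℕ => 4 * N) atTop atTop :=
      tendsto_id.const_mul_atTop' (by norm_num)
    have hH := Real.tendsto_harmonic_sub_log
    have key := ((((Real.tendsto_sum_pi_div_four.comp t2).const_mul (-(4/3))).add
      ((hH.comp t4).const_mul (8/3))).sub ((hH.comp t2).const_mul (10/3))).add
      (hH.const_mul (2/3)) |>.add_const (2 * Real.log 2)
    have hlim : (6 * Real.log 2 - π) / 3 = -(4/3) * (π / 4)
        + 8/3 * Real.eulerMascheroniConstant - 10/3 * Real.eulerMascheroniConstant
        + 2/3 * Real.eulerMascheroniConstant + 2 * Real.log 2 := by ring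
    rw [hlim]
    refine key.congr' ?_
    filter_upwards [eventually_gt_atTop 0] with N hN
    have hN' : (N:ℝ) ≠ 0 := by positivity
    have l2 : Real.log (2 * N) = Real.log 2 + Real.log N := Real.log_mul (by norm_num) hN'
    have l4 : Real.log (4 * N) = 2 * Real.log 2 + Real.log N := by
      rw [Real.log_mul (by norm_num) hN', show (4:ℝ) = 2 ^ 2 by norm_num, Real.log_pow]
      norm_num
    simp only [Function.comp_apply]
    push_cast
    rw [l2, l4]
    ring
  · intro n
    have hn : (0:ℝ) ≤ n := n.cast_nonneg
    have h1 : (0:ℝ) ≤ 2 * ((n:ℝ) + 1) - 1 := by linarith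
    have h2 : (0:ℝ) ≤ 4 * ((n:ℝ) + 1) - 1 := by linarith
    have h3 : (0:ℝ) ≤ 4 * ((n:ℝ) + 1) - 3 := by linarith
    positivity
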